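/- Suppose f is irreducible in ℤ[u^{±1}] and noncyclotomic. Then the topological entropies satisfy h(σ̄|_{Ȳ_f}) = h(σ̄|_{Z̄_f}) = h(α_f), where entropy on Ȳ_f and Z̄_f is taken with respect to the restriction of the shift σ̄ and the topology of coordinatewise convergence, and h(α_f) is the topological entropy of α_f on X_f. -/

import Mathlib

open Filter Topology Polynomial

noncomputable section

/-- `f(σ̄)` on real sequences. -/
def fsR (f : Polynomial ℤ) (w : ℤ → ℝ) : ℤ → ℝ :=
  fun n => ∑ k ∈ Finset.range (f.natDegree + 1), (f.coeff k : ℝ) * w (n + (k : ℤ))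

/-- Bounded real sequences. -/
def Bdd (w : ℤ → ℝ) : Prop := ∃ B : ℝ, ∀ n, |w n| ≤ B

/-- `f` is noncyclotomic. -/
def Noncyclotomic (f : Polynomial ℤ) : Prop :=
  ∀ θ : ℂ, Polynomial.aeval θ f = 0 → ∀ n : ℕ, 0 < n → θ ^ n ≠ 1

/-- The shift `σ̄` on real sequences. -/
def shiftR (w : ℤ → ℝ) : ℤ → ℝ := fun n => w (n + 1)

/-- `σ̄^k` on real sequences. -/
def shiftIterR (k : ℤ) (w : ℤ → ℝ) : ℤ → ℝ := fun n => w (n + k)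

/-- Membership in `W_f = f(σ̄)^{-1}(ℓ^∞(ℤ,ℤ))`. -/
def InWf (f : Polynomial ℤ) (w : ℤ → ℝ) : Prop :=
  Bdd w ∧ ∀ n, ∃ z : ℤ, fsR f w n = (z : ℝ)

/-- `Y_f = W_f ∩ [0,1)^ℤ`. -/
def YfSet (f : Polynomial ℤ) : Set (ℤ → ℝ) :=
  {w | InWf f w ∧ ∀ n, w n ∈ Set.Ico (0:ℝ) 1}

/-- `Z̄_f = f(σ̄)(Ȳ_f)`, where `Ȳ_f` is the closure of `Y_f` in the topology of
coordinatewise convergence. -/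
def ZbarR (f : Polynomial ℤ) : Set (ℤ → ℝ) := fsR f '' closure (YfSet f)

/-- The circle `ℝ/ℤ`. -/
abbrev Torus := AddCircle (1 : ℝ)

/-- The shift `σ` on `𝕋^ℤ`. -/
def shiftT (x : ℤ → Torus) : ℤ → Torus := fun n => x (n + 1)

/-- `f(σ)` acting on `𝕋^ℤ`. -/
def fsT (f : Polynomial ℤ) (x : ℤ → Torus) : ℤ → Torus :=
  fun n => ∑ k ∈ Finset.range (f.natDegree + 1), f.coeff k • x (n + (k : ℤ))

/-- `X_f = ker f(σ) ⊆ 𝕋^ℤ`. -/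
def Xf (f : Polynomial ℤ) : Set (ℤ → Torus) := {x | ∀ n, fsT f x n = 0}

/-!
By definition `Z̄_f` is the image of `Ȳ_f` under `f(σ̄)`, and reduction modulo `1` maps `Y_f` onto
`X_f`. Both maps are uniformly continuous and commute with the shifts, so they do not increase
entropy; moreover a set and its closure have the same entropy, so `Ȳ_f` may be replaced by `Y_f`.

Conversely, neither map loses entropy, because its fibres, even over dynamical balls, can be covered
by a number of balls polynomial in the length `n` of the orbit. Take two points of `Y_f` whose
images are close on a window of length `n`. Their difference, after removing integers in the case of
`X_f`, is mapped by `f(σ̄)` to integers of absolute value `< 1` on the window, so there it is a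
solution of the linear recurrence `f(σ̄)v = 0`. The solutions form a space of dimension at most
`deg f`, and the signs of `O(n)` affine functionals on it determine a point of `Y_f` up to `ε` on
the window. A family of `N` affine functionals on a `d`-dimensional space has at most `(N + 1)^d`
sign patterns, since the patterns shatter no set of more than `d` functionals (Sauer–Shelah).
-/

section CoverEntropy

open Dynamics ExpGrowth Uniformity SetRel

lemma expGrowthSup_affine_pow (a d : ℕ) {b : ℕ} (hb : b ≠ 0) :
    expGrowthSup (fun n : ℕ => (((a * n + b) ^ d : ℕ) : ENNReal)) = 0 := by
  refine le_antisymm ((expGrowthSup_le_iff).2 fun r hr => ?_)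
    (Monotone.expGrowthSup_nonneg (fun m n hmn => by gcongr) fun h => ?_)
  · obtain ⟨c, hc, hcr⟩ := EReal.lt_iff_exists_real_btwn.1 hr
    have hpow : (fun x : ℝ => (a * x + b) ^ d) =o[atTop] fun x => Real.exp (c * x) := by
      refine Asymptotics.IsBigO.trans_isLittleO (g := fun x : ℝ => x ^ d) ?_
        (isLittleO_pow_exp_pos_mul_atTop d (by exact_mod_cast hc))
      exact (((Asymptotics.isBigO_refl _ _).const_mul_left _).add
        (Asymptotics.isLittleO_const_id_atTop _).isBigO).pow d
    filter_upwards [tendsto_natCast_atTop_atTop.eventually (hpow.bound one_pos)] with n hn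
    have hn' : (((a * n + b) ^ d : ℕ) : ℝ) ≤ Real.exp (c * n) := by
      simpa [abs_of_nonneg (by positivity : (0 : ℝ) ≤ a * n + b)] using hn
    calc (((a * n + b) ^ d : ℕ) : ENNReal)
        ≤ ENNReal.ofReal (Real.exp (c * n)) := by
          rw [← ENNReal.ofReal_natCast]
          exact ENNReal.ofReal_le_ofReal hn'
      _ = EReal.exp ((c : EReal) * n) := by
          rw [← EReal.exp_coe]
          push_cast
          rfl
      _ ≤ EReal.exp (r * n) := EReal.exp_monotone (by gcongr)
  · have := congrFun h 0
    simp [hb] at this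

variable {X Y ι : Type*} {S : X → X} {T : Y → Y} {φ : X → Y} {F : Set X} {G : Set Y}

lemma coverMincard_biUnion_le (T : X → X) (t : Finset ι) (F : ι → Set X) (U : SetRel X X)
    (n : ℕ) : coverMincard T (⋃ i ∈ t, F i) U n ≤ ∑ i ∈ t, coverMincard T (F i) U n := by
  classical
  induction t using Finset.induction_on with
  | empty => simp [coverMincard_empty]
  | insert i t hi ih =>
    rw [Finset.set_biUnion_insert, Finset.sum_insert hi]
    exact (coverMincard_union_le T _ _ U n).trans (by gcongr)

lemma coverMincard_le_card_mul_of_fibers (hφ : Set.MapsTo φ F G) {U : SetRel X X}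
    {V : SetRel Y Y} {n : ℕ} {t : Finset Y} (ht : IsDynCoverOf T G V n t) {c : ℕ∞}
    (hc : ∀ y ∈ t, coverMincard S {x ∈ F | (φ x, y) ∈ dynEntourage T V n} U n ≤ c) :
    coverMincard S F U n ≤ t.card * c := by
  have hF : F ⊆ ⋃ y ∈ t, {x ∈ F | (φ x, y) ∈ dynEntourage T V n} := fun x hx => by
    obtain ⟨y, hy, hxy⟩ := ht (hφ hx)
    exact Set.mem_biUnion hy ⟨hx, hxy⟩
  calc coverMincard S F U n
      ≤ ∑ y ∈ t, coverMincard S {x ∈ F | (φ x, y) ∈ dynEntourage T V n} U n :=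
        (coverMincard_monotone_subset S U n hF).trans (coverMincard_biUnion_le S t _ U n)
    _ ≤ t.card * c := (Finset.sum_le_card_nsmul t _ c hc).trans_eq (nsmul_eq_mul _ _)

lemma coverMincard_le_coverMincard_mul_of_fibers (hφ : Set.MapsTo φ F G) {U : SetRel X X}
    {V W : SetRel Y Y} [W.IsSymm] (hWV : W ○ W ⊆ V) {n : ℕ} {c : ℕ∞} (hc₀ : c ≠ 0)
    (hc : ∀ x₀ ∈ F,
      coverMincard S {x ∈ F | (φ x, φ x₀) ∈ dynEntourage T V n} U n ≤ c) :
    coverMincard S F U n ≤ coverMincard T G W n * c := by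
  rcases eq_or_ne (coverMincard T G W n) ⊤ with htop | htop
  · simp [htop, ENat.top_mul hc₀]
  obtain ⟨t, ht, htcard⟩ := (coverMincard_finite_iff T G W n).1 htop.lt_top
  rw [← htcard]
  refine coverMincard_le_card_mul_of_fibers hφ ht fun y _ => ?_
  rcases Set.eq_empty_or_nonempty {x ∈ F | (φ x, y) ∈ dynEntourage T W n} with h | ⟨x₀, hx₀, hy⟩
  · simp [h, coverMincard_empty]
  have hsub : {x ∈ F | (φ x, y) ∈ dynEntourage T W n} ⊆
      {x ∈ F | (φ x, φ x₀) ∈ dynEntourage T V n} := fun x hx =>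
    ⟨hx.1, dynEntourage_monotone T n hWV <|
      dynEntourage_comp_subset T W W n (SetRel.prodMk_mem_comp hx.2 (SetRel.symm _ hy))⟩
  exact (coverMincard_monotone_subset S U n hsub).trans (hc x₀ hx₀)

lemma coverEntropy_le_of_fibers [UniformSpace X] [UniformSpace Y] (hφ : Set.MapsTo φ F G)
    (h : ∀ U ∈ 𝓤 X, ∃ V ∈ 𝓤 Y, ∃ c : ℕ → ℕ, expGrowthSup (fun n => (c n : ENNReal)) = 0 ∧
      ∀ n > 0, ∀ x₀ ∈ F,
        coverMincard S {x ∈ F | (φ x, φ x₀) ∈ dynEntourage T V n} U n ≤ c n) :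
    coverEntropy S F ≤ coverEntropy T G := by
  rcases F.eq_empty_or_nonempty with rfl | ⟨x₀, hx₀⟩
  · simp
  refine iSup₂_le fun U hU => ?_
  obtain ⟨V, hV, c, hc₀, hc⟩ := h U hU
  obtain ⟨W, hW, hWsymm, hWV⟩ := comp_symm_mem_uniformity_sets hV
  have hcard : ∀ n > 0, coverMincard S F U n ≤ coverMincard T G W n * c n := fun n hn => by
    refine coverMincard_le_coverMincard_mul_of_fibers hφ hWV (fun h0 => ?_) (hc n hn)
    have hmem : x₀ ∈ {x ∈ F | (φ x, φ x₀) ∈ dynEntourage T V n} :=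
      ⟨hx₀, mem_dynEntourage.2 fun k _ => refl_mem_uniformity hV⟩
    simpa [h0] using ((one_le_coverMincard_iff S _ U n).2 ⟨x₀, hmem⟩).trans (hc n hn x₀ hx₀)
  calc coverEntropyEntourage S F U
      ≤ expGrowthSup ((fun n => ((coverMincard T G W n : ℕ∞) : ENNReal)) *
          fun n => (c n : ENNReal)) := by
        refine expGrowthSup_eventually_monotone ?_
        filter_upwards [eventually_gt_atTop 0] with n hn
        simpa using ENat.toENNReal_mono (hcard n hn)
    _ ≤ coverEntropyEntourage T G W + 0 := by
        rw [← hc₀]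
        exact expGrowthSup_mul_le (by simp [hc₀]) (by simp [hc₀])
    _ ≤ coverEntropy T G := by
        simpa using coverEntropyEntourage_le_coverEntropy T G hW

end CoverEntropy

section SignPatterns

variable {𝕜 ι : Type*} [Field 𝕜]

lemma exists_annihilator_of_finrank_lt_card (V : Submodule 𝕜 (ι → 𝕜)) [Module.Finite 𝕜 V]
    {s : Finset ι} (hs : Module.finrank 𝕜 V < s.card) :
    ∃ g : ι → 𝕜, (∃ i ∈ s, g i ≠ 0) ∧ ∀ v ∈ V, ∑ i ∈ s, g i * v i = 0 := by
  let coord : ι → Module.Dual 𝕜 V := fun i => (LinearMap.proj i).comp V.subtype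
  have hdep : ¬ LinearIndepOn 𝕜 coord s := fun h => by
    have hcard := h.fintype_card_le_finrank
    simp only [Finset.coe_sort_coe, Fintype.card_coe, Subspace.dual_finrank_eq] at hcard
    exact hs.not_ge hcard
  obtain ⟨g, hg, hne⟩ := not_linearIndepOn_finset_iff.1 hdep
  refine ⟨g, hne, fun v hv => ?_⟩
  simpa [coord] using LinearMap.congr_fun hg ⟨v, hv⟩

lemma sum_choose_le_pow (n d : ℕ) : ∑ k ∈ Finset.Iic d, n.choose k ≤ (n + 1) ^ d := by
  rw [add_pow, ← Nat.range_succ_eq_Iic]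
  refine Finset.sum_le_sum fun k hk => ?_
  have hkd : k ≤ d := by simpa [Nat.lt_succ_iff] using hk
  calc n.choose k ≤ n ^ k := Nat.choose_le_pow n k
    _ ≤ n ^ k * 1 ^ (d - k) * d.choose k := by
      simpa using Nat.le_mul_of_pos_right _ (Nat.choose_pos hkd)

variable [LinearOrder 𝕜] [Fintype ι]

/-- The sign pattern of a vector, encoded by the set of its nonnegative coordinates. -/
def nonnegSet (v : ι → 𝕜) : Finset ι := {i | 0 ≤ v i}

lemma mem_nonnegSet {v : ι → 𝕜} {i : ι} : i ∈ nonnegSet v ↔ 0 ≤ v i := by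
  simp [nonnegSet]

variable [IsStrictOrderedRing 𝕜]

lemma card_le_finrank_of_shatters [DecidableEq ι] (V : Submodule 𝕜 (ι → 𝕜)) (a : ι → 𝕜)
    {𝒜 : Finset (Finset ι)} (h𝒜 : ∀ t ∈ 𝒜, ∃ v ∈ V, nonnegSet (a + v) = t) {s : Finset ι}
    (hs : 𝒜.Shatters s) : s.card ≤ Module.finrank 𝕜 V := by
  by_contra! hcard
  obtain ⟨g, ⟨i, hi, hgi⟩, hg⟩ := exists_annihilator_of_finrank_lt_card V hcard
  have hcut : ∀ t ⊆ s, ∃ v ∈ V, ∀ j ∈ s, 0 ≤ a j + v j ↔ j ∈ t := fun t ht => by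
    obtain ⟨u, hu, rfl⟩ := hs ht
    obtain ⟨v, hv, rfl⟩ := h𝒜 u hu
    exact ⟨v, hv, fun j hj => by simp [hj, mem_nonnegSet]⟩
  obtain ⟨v, hv, hvpos⟩ := hcut {j ∈ s | 0 < g j} (Finset.filter_subset _ _)
  obtain ⟨w, hw, hwneg⟩ := hcut {j ∈ s | g j < 0} (Finset.filter_subset _ _)
  -- `v - w` has the signs of `g` on `s`, so its pairing with `g` cannot vanish
  have hterm : ∀ j ∈ s, g j ≠ 0 → 0 < g j * (v - w) j := fun j hj hgj => by
    have hvj := hvpos j hj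
    have hwj := hwneg j hj
    simp only [Finset.mem_filter, hj, true_and] at hvj hwj
    rw [Pi.sub_apply]
    rcases hgj.lt_or_gt with h | h
    · exact mul_pos_of_neg_of_neg h (by linarith [hwj.2 h, not_le.1 (mt hvj.1 h.not_gt)])
    · exact mul_pos h (by linarith [hvj.2 h, not_le.1 (mt hwj.1 h.not_gt)])
  refine (Finset.sum_pos' (fun j hj => ?_) ⟨i, hi, hterm i hi hgi⟩).ne' (hg _ (sub_mem hv hw))
  rcases eq_or_ne (g j) 0 with h | h
  · simp [h]
  · exact (hterm j hj h).le

lemma card_nonnegSet_le (V : Submodule 𝕜 (ι → 𝕜)) (a : ι → 𝕜) {𝒜 : Finset (Finset ι)}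
    (h𝒜 : ∀ t ∈ 𝒜, ∃ v ∈ V, nonnegSet (a + v) = t) :
    𝒜.card ≤ (Fintype.card ι + 1) ^ Module.finrank 𝕜 V := by
  classical
  have hvc : 𝒜.vcDim ≤ Module.finrank 𝕜 V := Finset.sup_le fun s hs =>
    card_le_finrank_of_shatters V a h𝒜 (Finset.mem_shatterer.1 hs)
  calc 𝒜.card ≤ 𝒜.shatterer.card := Finset.card_le_card_shatterer 𝒜
    _ ≤ ∑ k ∈ Finset.Iic 𝒜.vcDim, (Fintype.card ι).choose k := Finset.card_shatterer_le_sum_vcDim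
    _ ≤ (Fintype.card ι + 1) ^ 𝒜.vcDim := sum_choose_le_pow _ _
    _ ≤ (Fintype.card ι + 1) ^ Module.finrank 𝕜 V := by gcongr; exact Nat.succ_pos _

lemma exists_isCover_of_nonnegSet {X : Type*} {A : Set X} {U : SetRel X X}
    (V : Submodule 𝕜 (ι → 𝕜)) (a : ι → 𝕜) {v : X → ι → 𝕜} (hv : ∀ x ∈ A, v x ∈ V)
    (hU : ∀ x ∈ A, ∀ y ∈ A, nonnegSet (a + v x) = nonnegSet (a + v y) → (x, y) ∈ U) :
    ∃ s : Finset X, s.card ≤ (Fintype.card ι + 1) ^ Module.finrank 𝕜 V ∧ U.IsCover A s := by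
  classical
  obtain ⟨r, hrA, hr⟩ := Set.exists_subset_bijOn A fun x => nonnegSet (a + v x)
  have hrfin : r.Finite := (hr.finite_iff_finite).2 (Set.toFinite _)
  lift r to Finset X using hrfin
  refine ⟨r, ?_, fun x hx => ?_⟩
  · rw [← Finset.card_image_of_injOn hr.injOn]
    refine card_nonnegSet_le V a fun t ht => ?_
    obtain ⟨x, hx, rfl⟩ := Finset.mem_image.1 ht
    exact ⟨v x, hv x (hrA hx), rfl⟩
  · obtain ⟨y, hy, hxy⟩ := hr.surjOn (Set.mem_image_of_mem _ hx)
    exact ⟨y, hy, hU x hx y (hrA hy) hxy.symm⟩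

end SignPatterns

section Windows

open Dynamics Uniformity

/-- The shift on bi-infinite sequences, of which `shiftR` and `shiftT` are the instances for `ℝ`
and `𝕋`. -/
def sequenceShift {α : Type*} (x : ℤ → α) : ℤ → α := fun n => x (n + 1)

lemma iterate_sequenceShift_apply {α : Type*} (k : ℕ) (x : ℤ → α) (i : ℤ) :
    sequenceShift^[k] x i = x (i + k) := by
  induction k generalizing x with
  | zero => simp
  | succ k ih =>
    rw [Function.iterate_succ_apply, ih, sequenceShift, Nat.cast_succ, add_assoc]

variable {α β : Type*} [PseudoMetricSpace α] [PseudoMetricSpace β]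

/-- Pairs of sequences that are `δ`-close at the `ℓ` consecutive integers starting from `p`: the
basic entourages for coordinatewise convergence. -/
def windowEntourage (p : ℤ) (ℓ : ℕ) (δ : ℝ) : SetRel (ℤ → α) (ℤ → α) :=
  {x | ∀ i < ℓ, dist (x.1 (p + i)) (x.2 (p + i)) < δ}

lemma windowEntourage_mem_uniformity (p : ℤ) (ℓ : ℕ) {δ : ℝ} (hδ : 0 < δ) :
    (windowEntourage p ℓ δ : SetRel (ℤ → α) (ℤ → α)) ∈ 𝓤 (ℤ → α) :=
  (Set.finite_lt_nat ℓ).eventually_all.2 fun i _ =>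
    (Pi.uniformContinuous_proj (fun _ : ℤ => α) (p + i)).eventually (Metric.dist_mem_uniformity hδ)

lemma exists_windowEntourage_subset {U : SetRel (ℤ → α) (ℤ → α)} (hU : U ∈ 𝓤 (ℤ → α)) :
    ∃ N : ℕ, ∃ ε > 0, windowEntourage (-N) (2 * N + 1) ε ⊆ U := by
  rw [Pi.uniformity] at hU
  obtain ⟨⟨I, r⟩, ⟨hI, hr⟩, hsub⟩ := (HasBasis.iInf' fun i : ℤ =>
    (Metric.uniformity_basis_dist (α := α)).comap
      (fun a : (ℤ → α) × (ℤ → α) => (a.1 i, a.2 i))).mem_iff.1 hU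
  obtain ⟨N, hN⟩ := (hI.image Int.natAbs).bddAbove
  have hsmall : ∀ᶠ ε in 𝓝[>] (0 : ℝ), ∀ i ∈ I, ε ≤ r i := hI.eventually_all.2 fun i hi =>
    eventually_nhdsWithin_of_eventually_nhds (eventually_le_nhds (hr i hi))
  obtain ⟨ε, hεr, hε⟩ := (hsmall.and self_mem_nhdsWithin).exists
  refine ⟨N, ε, hε, fun x hx => hsub (Set.mem_iInter₂.2 fun i hi => ?_)⟩
  have hiN : i.natAbs ≤ N := hN (Set.mem_image_of_mem _ hi)
  have hxi := hx (i + N).toNat (by omega)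
  rw [Int.toNat_of_nonneg (by omega), neg_add_cancel_comm_assoc] at hxi
  exact hxi.trans_le (hεr i hi)

lemma dynEntourage_windowEntourage (p : ℤ) (ℓ n : ℕ) (δ : ℝ) :
    dynEntourage sequenceShift (windowEntourage p (ℓ + 1) δ : SetRel (ℤ → α) (ℤ → α)) (n + 1) =
      windowEntourage p (ℓ + n + 1) δ := by
  ext ⟨x, y⟩
  simp only [mem_dynEntourage, windowEntourage, Set.mem_ofPred_eq, iterate_sequenceShift_apply]
  refine ⟨fun h i hi => ?_, fun h k hk i hi => ?_⟩
  · have hdist := h (min i n) (by omega) (i - min i n) (by omega)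
    rwa [add_assoc, ← Nat.cast_add, Nat.sub_add_cancel (min_le_left i n)] at hdist
  · have hdist := h (i + k) (by omega)
    rwa [Nat.cast_add, ← add_assoc] at hdist

/-- The fibres of `φ` over sequences that are close to each other on a window can be covered, up to
any precision `ε` on a window shorter by `r`, by a number of points polynomial in its length. -/
def HasPolynomialFibers (φ : (ℤ → α) → ℤ → β) (F : Set (ℤ → α)) : Prop :=
  ∀ ε > 0, ∃ δ > 0, ∃ r a d : ℕ, ∀ (p : ℤ) (ℓ : ℕ), ∀ x₀ ∈ F, ∃ s : Finset (ℤ → α),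
    s.card ≤ (a * ℓ + 1) ^ d ∧
      (windowEntourage p ℓ ε).IsCover {x ∈ F | (φ x, φ x₀) ∈ windowEntourage p (ℓ + r) δ} s

lemma HasPolynomialFibers.coverEntropy_le {φ : (ℤ → α) → ℤ → β} {F : Set (ℤ → α)}
    (h : HasPolynomialFibers φ F) {G : Set (ℤ → β)} (hφ : Set.MapsTo φ F G) :
    coverEntropy sequenceShift F ≤ coverEntropy sequenceShift G := by
  refine coverEntropy_le_of_fibers hφ fun U hU => ?_
  obtain ⟨N, ε, hε, hNU⟩ := exists_windowEntourage_subset hU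
  obtain ⟨δ, hδ, r, a, d, hcover⟩ := h ε hε
  refine ⟨windowEntourage (-N) (2 * N + r + 1) δ, windowEntourage_mem_uniformity _ _ hδ,
    fun n => (a * n + (2 * N * a + 1)) ^ d, expGrowthSup_affine_pow a d (Nat.succ_ne_zero _),
    fun n hn x₀ hx₀ => ?_⟩
  obtain ⟨n, rfl⟩ := Nat.exists_eq_add_one_of_ne_zero hn.ne'
  obtain ⟨s, hs, hcov⟩ := hcover (-N) (2 * N + n + 1) x₀ hx₀
  have hdyn : IsDynCoverOf sequenceShift
      {x ∈ F | (φ x, φ x₀) ∈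
        dynEntourage sequenceShift (windowEntourage (-N) (2 * N + r + 1) δ) (n + 1)}
      U (n + 1) s := by
    rw [dynEntourage_windowEntourage, show 2 * N + r + n + 1 = 2 * N + n + 1 + r by omega]
    refine hcov.mono_entourage ?_
    rw [← dynEntourage_windowEntourage]
    exact dynEntourage_monotone _ _ hNU
  refine hdyn.coverMincard_le_card.trans (Nat.cast_le.2 (hs.trans_eq ?_))
  congr 1
  ring

end Windows

section Recurrence

lemma exists_isSolution_eq_of_lt {R : Type*} [CommSemiring R] (E : LinearRecurrence R) {w : ℕ → R}
    {ℓ : ℕ} (hw : ∀ n < ℓ, w (n + E.order) = ∑ k, E.coeffs k * w (n + k)) :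
    ∃ u, E.IsSolution u ∧ ∀ n < ℓ + E.order, w n = u n := by
  refine ⟨E.mkSol fun k => w k, E.is_sol_mkSol _, fun n => ?_⟩
  induction n using Nat.strong_induction_on with
  | _ n ih =>
    intro hn
    rcases lt_or_ge n E.order with h | h
    · exact (E.mkSol_eq_init (fun k => w k) ⟨n, h⟩).symm
    · obtain ⟨m, rfl⟩ := Nat.exists_eq_add_of_le' h
      rw [hw m (by omega), E.is_sol_mkSol]
      exact Finset.sum_congr rfl fun k _ => by rw [ih (m + k) (by omega) (by omega)]

lemma exists_isCover_of_recurrence {𝕜 : Type*} [Field 𝕜] [LinearOrder 𝕜] [IsStrictOrderedRing 𝕜]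
    (E : LinearRecurrence 𝕜) {X : Type*} {A : Set X} {U : SetRel X X} {v : X → ℕ → 𝕜} {ℓ : ℕ}
    (hv : ∀ x ∈ A, ∀ n < ℓ, v x (n + E.order) = ∑ k, E.coeffs k * v x (n + k))
    {ι : Type*} [Fintype ι] {c : ι → ℕ} (hc : ∀ i, c i < ℓ + E.order) (a : ι → 𝕜)
    (hU : ∀ x ∈ A, ∀ y ∈ A, (∀ i, 0 ≤ a i + v x (c i) ↔ 0 ≤ a i + v y (c i)) → (x, y) ∈ U) :
    ∃ s : Finset X, s.card ≤ (Fintype.card ι + 1) ^ E.order ∧ U.IsCover A s := by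
  let V : Submodule 𝕜 (ι → 𝕜) := E.solSpace.map (LinearMap.funLeft 𝕜 𝕜 c)
  have hV : Module.finrank 𝕜 V ≤ E.order := by
    have := Module.Finite.equiv E.toInit.symm
    refine (Submodule.finrank_map_le _ _).trans_eq ?_
    rw [E.toInit.finrank_eq, Module.finrank_fin_fun]
  have hmem : ∀ x ∈ A, (fun i => v x (c i)) ∈ V := fun x hx => by
    obtain ⟨u, hu, hvu⟩ := exists_isSolution_eq_of_lt E (hv x hx)
    exact ⟨u, hu, funext fun i => (hvu _ (hc i)).symm⟩
  obtain ⟨s, hs, hcov⟩ := exists_isCover_of_nonnegSet V a hmem fun x hx y hy hxy =>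
    hU x hx y hy fun i => by
      simpa only [mem_nonnegSet, Pi.add_apply] using Finset.ext_iff.1 hxy i
  exact ⟨s, hs.trans (Nat.pow_le_pow_right (Nat.succ_pos _) hV), hcov⟩

/-- The linear recurrence satisfied by the sequences in the kernel of `f(σ̄)`, obtained by solving
`f(σ̄)v = 0` for the entry multiplied by the leading coefficient. -/
def kernelRecurrence (f : Polynomial ℤ) : LinearRecurrence ℝ where
  order := f.natDegree
  coeffs k := -(f.coeff k / f.leadingCoeff)

lemma kernelRecurrence_of_fsR_eq_zero {f : Polynomial ℤ} (hf : f ≠ 0) {w : ℤ → ℝ} {p : ℤ} {n : ℕ}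
    (hw : fsR f w (p + n) = 0) :
    w (p + ((n + (kernelRecurrence f).order : ℕ) : ℤ)) =
      ∑ k, (kernelRecurrence f).coeffs k * w (p + ((n + k : ℕ) : ℤ)) := by
  have hlead : (f.leadingCoeff : ℝ) ≠ 0 := by exact_mod_cast Polynomial.leadingCoeff_ne_zero.2 hf
  rw [fsR, Finset.sum_range_succ, ← Fin.sum_univ_eq_sum_range
    (fun k => (f.coeff k : ℝ) * w (p + n + k)), Polynomial.coeff_natDegree] at hw
  apply mul_left_cancel₀ hlead
  change f.leadingCoeff * w (p + ((n + f.natDegree : ℕ) : ℤ)) =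
    f.leadingCoeff * ∑ k : Fin f.natDegree,
      -(f.coeff k / f.leadingCoeff : ℝ) * w (p + ((n + k : ℕ) : ℤ))
  push_cast
  simp only [← add_assoc]
  rw [eq_neg_of_add_eq_zero_right hw, Finset.mul_sum, ← Finset.sum_neg_distrib]
  exact Finset.sum_congr rfl fun k _ => by field_simp

lemma exists_isCover_of_fsR_eq_zero {f : Polynomial ℤ} (hf : f ≠ 0) {X : Type*} {A : Set X}
    {U : SetRel X X} {v : X → ℤ → ℝ} {p : ℤ} {ℓ : ℕ}
    (hv : ∀ x ∈ A, ∀ n < ℓ, fsR f (v x) (p + n) = 0) {ι : Type*} [Fintype ι] {c : ι → ℕ}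
    (hc : ∀ i, c i < ℓ + f.natDegree) (a : ι → ℝ)
    (hU : ∀ x ∈ A, ∀ y ∈ A,
      (∀ i, 0 ≤ a i + v x (p + c i) ↔ 0 ≤ a i + v y (p + c i)) → (x, y) ∈ U) :
    ∃ s : Finset X, s.card ≤ (Fintype.card ι + 1) ^ f.natDegree ∧ U.IsCover A s :=
  exists_isCover_of_recurrence (kernelRecurrence f) (v := fun x n => v x (p + n))
    (fun x hx n hn => kernelRecurrence_of_fsR_eq_zero hf (hv x hx n hn)) hc a hU

lemma fsR_sub (f : Polynomial ℤ) (v w : ℤ → ℝ) : fsR f (v - w) = fsR f v - fsR f w := by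
  ext n
  simp [fsR, mul_sub]

lemma abs_fsR_le (f : Polynomial ℤ) (v : ℤ → ℝ) (n : ℤ) {r : ℝ}
    (hv : ∀ k ≤ f.natDegree, |v (n + k)| ≤ r) :
    |fsR f v n| ≤ (∑ k ∈ Finset.range (f.natDegree + 1), |(f.coeff k : ℝ)|) * r := by
  rw [fsR, Finset.sum_mul]
  refine (Finset.abs_sum_le_sum_abs _ _).trans (Finset.sum_le_sum fun k hk => ?_)
  rw [abs_mul]
  gcongr
  exact hv k (Finset.mem_range_succ_iff.1 hk)

lemma uniformContinuous_fsR (f : Polynomial ℤ) : UniformContinuous (fsR f) := by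
  have hcont : Continuous (fsR f) := by unfold fsR; fun_prop
  exact uniformContinuous_addMonoidHom_of_continuous
    (f := AddMonoidHom.ofMapSub _ (fsR_sub f)) hcont

lemma semiconj_fsR (f : Polynomial ℤ) : Function.Semiconj (fsR f) shiftR shiftR := fun w => by
  ext n
  simp only [fsR, shiftR, add_right_comm n 1]

end Recurrence

section Approximation

lemma eq_zero_of_isInt_of_abs_lt_one {x : ℝ} (hx : ∃ z : ℤ, x = z) (h : |x| < 1) : x = 0 := by
  obtain ⟨z, rfl⟩ := hx
  exact_mod_cast Int.abs_lt_one_iff.1 (by exact_mod_cast h)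

lemma abs_sub_lt_inv_of_forall_div_le_iff {𝕜 : Type*} [Field 𝕜] [LinearOrder 𝕜]
    [IsStrictOrderedRing 𝕜] [FloorRing 𝕜] {M : ℕ} (hM : 0 < M) {x y : 𝕜}
    (hx : x ∈ Set.Ico 0 1) (hy : y ∈ Set.Ico 0 1)
    (h : ∀ j < M, (j : 𝕜) / M ≤ x ↔ (j : 𝕜) / M ≤ y) : |x - y| < (M : 𝕜)⁻¹ := by
  have hM' : (0 : 𝕜) < M := by exact_mod_cast hM
  have hfloor : ∀ {u w : 𝕜}, u ∈ Set.Ico 0 1 → w ∈ Set.Ico 0 1 →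
      (∀ j < M, (j : 𝕜) / M ≤ u → (j : 𝕜) / M ≤ w) → ⌊u * M⌋₊ ≤ ⌊w * M⌋₊ := by
    intro u w hu hw huw
    have huM : 0 ≤ u * M := mul_nonneg hu.1 hM'.le
    have hlt : ⌊u * M⌋₊ < M := (Nat.floor_lt huM).2 (mul_lt_of_lt_one_left hM' hu.2)
    rw [Nat.le_floor_iff (mul_nonneg hw.1 hM'.le), ← div_le_iff₀ hM']
    exact huw _ hlt ((div_le_iff₀ hM').2 (Nat.floor_le huM))
  have hfloor_eq := (hfloor hx hy fun j hj => (h j hj).1).antisymm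
    (hfloor hy hx fun j hj => (h j hj).2)
  have hdist : |x * M - y * M| < 1 := by
    refine Int.abs_sub_lt_one_of_floor_eq_floor ?_
    rw [← Int.natCast_floor_eq_floor (mul_nonneg hx.1 hM'.le),
      ← Int.natCast_floor_eq_floor (mul_nonneg hy.1 hM'.le), hfloor_eq]
  rwa [← sub_mul, abs_mul, abs_of_pos hM', ← lt_div_iff₀ hM', one_div] at hdist

lemma fract_sub_fract_of_nonneg_iff {𝕜 : Type*} [Ring 𝕜] [LinearOrder 𝕜] [IsStrictOrderedRing 𝕜]
    [FloorRing 𝕜] {s t : 𝕜} (hs : |s| < 1) (ht : |t| < 1) (h : 0 ≤ s ↔ 0 ≤ t) :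
    Int.fract s - Int.fract t = s - t := by
  have hfract : ∀ {u : 𝕜}, |u| < 1 → u < 0 → Int.fract u = u + 1 := fun hu hu₀ => by
    rw [Int.fract_eq_iff]
    exact ⟨(neg_lt_iff_pos_add.1 (abs_lt.1 hu).1).le, add_lt_of_neg_left _ hu₀, -1, by simp⟩
  rcases lt_or_ge s 0 with hs₀ | hs₀
  · rw [hfract hs hs₀, hfract ht (not_le.1 (mt h.2 hs₀.not_ge)), add_sub_add_right_eq_sub]
  · rw [Int.fract_eq_self.2 ⟨hs₀, (abs_lt.1 hs).2⟩, Int.fract_eq_self.2 ⟨h.1 hs₀, (abs_lt.1 ht).2⟩]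

end Approximation

lemma hasPolynomialFibers_fsR {f : Polynomial ℤ} (hf : f ≠ 0) :
    HasPolynomialFibers (fsR f) (YfSet f) := by
  intro ε hε
  obtain ⟨M, hM, hMε⟩ := Real.exists_nat_pos_inv_lt hε
  refine ⟨1, one_pos, 0, M, f.natDegree, fun p ℓ w₀ hw₀ => ?_⟩
  set A : Set (ℤ → ℝ) := {w ∈ YfSet f | (fsR f w, fsR f w₀) ∈ windowEntourage p (ℓ + 0) 1}
  have hker : ∀ w ∈ A, ∀ n < ℓ, fsR f (w - w₀) (p + n) = 0 := fun w hw n hn => by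
    obtain ⟨z, hz⟩ := hw.1.1.2 (p + n)
    obtain ⟨z₀, hz₀⟩ := hw₀.1.2 (p + n)
    refine eq_zero_of_isInt_of_abs_lt_one ⟨z - z₀, ?_⟩ ?_
    · rw [fsR_sub, Pi.sub_apply, hz, hz₀, Int.cast_sub]
    · rw [fsR_sub]
      exact hw.2 n hn
  obtain ⟨s, hs, hcov⟩ := exists_isCover_of_fsR_eq_zero hf (ι := Fin ℓ × Fin M)
    (U := windowEntourage p ℓ ε) hker (c := fun i => i.1) (fun i => by omega)
    (fun i => w₀ (p + (i.1 : ℕ)) - (i.2 : ℕ) / M) fun w hw w' hw' hsign n hn => by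
      refine (abs_sub_lt_inv_of_forall_div_le_iff hM (hw.1.2 _) (hw'.1.2 _)
        fun j hj => ?_).trans hMε
      simpa [sub_add_eq_add_sub] using hsign (⟨n, hn⟩, ⟨j, hj⟩)
  refine ⟨s, hs.trans_eq ?_, hcov⟩
  simp [mul_comm]

section TorusReduction

/-- Coordinatewise reduction modulo `1`, which identifies `Y_f` with `X_f`. -/
def toTorus (w : ℤ → ℝ) : ℤ → Torus := fun n => (w n : Torus)

lemma fsT_toTorus (f : Polynomial ℤ) (w : ℤ → ℝ) (n : ℤ) :
    fsT f (toTorus w) n = (fsR f w n : Torus) := by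
  simp only [fsT, fsR, toTorus, QuotientAddGroup.mk_sum]
  refine Finset.sum_congr rfl fun k _ => ?_
  rw [← zsmul_eq_mul, AddCircle.coe_zsmul]

lemma coe_torus_eq_zero_iff {x : ℝ} : (x : Torus) = 0 ↔ ∃ z : ℤ, x = z := by
  simp [AddCircle.coe_eq_zero_iff (1 : ℝ), eq_comm]

lemma image_toTorus_YfSet (f : Polynomial ℤ) : toTorus '' YfSet f = Xf f := by
  have hint : ∀ w : ℤ → ℝ, (∀ n, ∃ z : ℤ, fsR f w n = z) ↔ toTorus w ∈ Xf f := fun w =>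
    forall_congr' fun n => by rw [fsT_toTorus, coe_torus_eq_zero_iff]
  refine Set.Subset.antisymm (Set.image_subset_iff.2 fun w hw => (hint w).1 hw.1.2) fun x hx => ?_
  have : Fact ((0 : ℝ) < 1) := ⟨one_pos⟩
  let w : ℤ → ℝ := fun n => AddCircle.equivIco 1 0 (x n)
  have hw : ∀ n, w n ∈ Set.Ico (0 : ℝ) 1 := fun n => by
    simpa using (AddCircle.equivIco (1 : ℝ) 0 (x n)).2
  have hwx : toTorus w = x := funext fun n => AddCircle.coe_equivIco
  refine ⟨w, ⟨⟨⟨1, fun n => ?_⟩, (hint w).2 (hwx ▸ hx)⟩, hw⟩, hwx⟩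
  exact (abs_of_nonneg (hw n).1).trans_le (hw n).2.le

lemma semiconj_toTorus : Function.Semiconj toTorus shiftR shiftT := fun _ => rfl

lemma uniformContinuous_toTorus : UniformContinuous toTorus :=
  uniformContinuous_pi.2 fun n =>
    (uniformContinuous_of_continuousAt_zero (QuotientAddGroup.mk' (AddSubgroup.zmultiples (1 : ℝ)))
      (AddCircle.continuous_mk' 1).continuousAt).comp (Pi.uniformContinuous_proj _ n)

lemma dist_toTorus (v w : ℤ → ℝ) (n : ℤ) :
    dist (toTorus v n) (toTorus w n) = |v n - w n - round (v n - w n)| := by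
  rw [dist_eq_norm]
  exact UnitAddCircle.norm_eq (x := v n - w n)

/-- The part of `w - w₀` that survives reduction modulo `1`, represented in `[-1/2, 1/2]`. -/
def reducedDiff (w₀ w : ℤ → ℝ) : ℤ → ℝ := fun n => w n - w₀ n - round (w n - w₀ n)

lemma exists_fsR_reducedDiff_eq {f : Polynomial ℤ} {w₀ w : ℤ → ℝ} {n : ℤ}
    (hw₀ : ∃ z : ℤ, fsR f w₀ n = z) (hw : ∃ z : ℤ, fsR f w n = z) :
    ∃ z : ℤ, fsR f (reducedDiff w₀ w) n = z := by
  obtain ⟨z, hz⟩ := hw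
  obtain ⟨z₀, hz₀⟩ := hw₀
  have hcoe : toTorus (reducedDiff w₀ w) = toTorus (w - w₀) := funext fun n => by
    rw [← sub_eq_zero]
    exact coe_torus_eq_zero_iff.2 ⟨-round (w n - w₀ n), by simp [reducedDiff]⟩
  rw [← coe_torus_eq_zero_iff, ← fsT_toTorus, hcoe, fsT_toTorus, fsR_sub, coe_torus_eq_zero_iff]
  exact ⟨z - z₀, by simp [hz, hz₀]⟩

lemma sub_eq_reducedDiff_sub_of_nonneg_iff {w₀ w w' : ℤ → ℝ} {n : ℤ} (hw : w n ∈ Set.Ico (0 : ℝ) 1)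
    (hw' : w' n ∈ Set.Ico (0 : ℝ) 1) (hsmall : |reducedDiff w₀ w n| < 1 / 2)
    (hsmall' : |reducedDiff w₀ w' n| < 1 / 2)
    (h : 0 ≤ w₀ n - round (w₀ n) + reducedDiff w₀ w n ↔
      0 ≤ w₀ n - round (w₀ n) + reducedDiff w₀ w' n) :
    w n - w' n = reducedDiff w₀ w n - reducedDiff w₀ w' n := by
  have hfract : ∀ u : ℤ → ℝ, u n ∈ Set.Ico (0 : ℝ) 1 →
      Int.fract (w₀ n - round (w₀ n) + reducedDiff w₀ u n) = u n := fun u hu =>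
    Int.fract_eq_iff.2 ⟨hu.1, hu.2, -round (w₀ n) - round (u n - w₀ n), by
      simp only [reducedDiff]; push_cast; ring⟩
  have hlt : ∀ {t : ℝ}, |t| < 1 / 2 → |w₀ n - round (w₀ n) + t| < 1 := fun ht =>
    (abs_add_le _ _).trans_lt (by linarith [abs_sub_round (w₀ n)])
  have := fract_sub_fract_of_nonneg_iff (hlt hsmall) (hlt hsmall') h
  rwa [hfract w hw, hfract w' hw', add_sub_add_left_eq_sub] at this

lemma hasPolynomialFibers_toTorus {f : Polynomial ℤ} (hf : f ≠ 0) :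
    HasPolynomialFibers toTorus (YfSet f) := by
  intro ε hε
  set B : ℝ := ∑ k ∈ Finset.range (f.natDegree + 1), |(f.coeff k : ℝ)|
  obtain ⟨δ, ⟨hδhalf, hδε, hδB⟩, hδ⟩ : ∃ δ, (δ < 1 / 2 ∧ δ < ε / 2 ∧ B * δ < 1) ∧ 0 < δ := by
    have hB : Tendsto (fun δ => B * δ) (𝓝[>] 0) (𝓝 0) := by
      simpa using ((continuous_const_mul B).tendsto 0).mono_left nhdsWithin_le_nhds
    exact (((eventually_nhdsWithin_of_eventually_nhds (eventually_lt_nhds one_half_pos)).and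
      ((eventually_nhdsWithin_of_eventually_nhds (eventually_lt_nhds (half_pos hε))).and
        (hB.eventually_lt_const one_pos))).and self_mem_nhdsWithin).exists
  refine ⟨δ, hδ, f.natDegree, 1, f.natDegree, fun p ℓ w₀ hw₀ => ?_⟩
  set A : Set (ℤ → ℝ) :=
    {w ∈ YfSet f | (toTorus w, toTorus w₀) ∈ windowEntourage p (ℓ + f.natDegree) δ}
  have hsmall : ∀ w ∈ A, ∀ n < ℓ + f.natDegree, |reducedDiff w₀ w (p + n)| < δ :=
    fun w hw n hn => (dist_toTorus w w₀ (p + n)).symm.trans_lt (hw.2 n hn)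
  have hker : ∀ w ∈ A, ∀ n < ℓ, fsR f (reducedDiff w₀ w) (p + n) = 0 := fun w hw n hn => by
    refine eq_zero_of_isInt_of_abs_lt_one (exists_fsR_reducedDiff_eq (hw₀.1.2 _) (hw.1.1.2 _)) ?_
    refine (abs_fsR_le f _ _ fun k hk => ?_).trans_lt hδB
    rw [add_assoc, ← Nat.cast_add]
    exact (hsmall w hw (n + k) (by omega)).le
  obtain ⟨s, hs, hcov⟩ := exists_isCover_of_fsR_eq_zero hf (ι := Fin ℓ)
    (U := windowEntourage p ℓ ε) hker (c := fun i => i) (fun i => by omega)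
    (fun i => w₀ (p + (i : ℕ)) - round (w₀ (p + (i : ℕ)))) fun w hw w' hw' hsign n hn => by
      have hv := hsmall w hw n (by omega)
      have hv' := hsmall w' hw' n (by omega)
      rw [Real.dist_eq, sub_eq_reducedDiff_sub_of_nonneg_iff (hw.1.2 _) (hw'.1.2 _)
        (hv.trans hδhalf) (hv'.trans hδhalf) (hsign ⟨n, hn⟩)]
      exact (abs_sub _ _).trans_lt (by linarith)
  exact ⟨s, by simpa using hs, hcov⟩

end TorusReduction

section Entropy

open Dynamics

lemma continuous_shiftR : Continuous shiftR :=
  continuous_pi fun n => continuous_apply (n + 1)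

lemma coverEntropy_closure_YfSet_eq_ZbarR {f : Polynomial ℤ} (hf : f ≠ 0) :
    coverEntropy shiftR (closure (YfSet f)) = coverEntropy shiftR (ZbarR f) := by
  refine le_antisymm ?_
    (coverEntropy_image_le_of_uniformContinuous (semiconj_fsR f) (uniformContinuous_fsR f) _)
  rw [coverEntropy_closure continuous_shiftR]
  exact (hasPolynomialFibers_fsR hf).coverEntropy_le fun w hw => ⟨w, subset_closure hw, rfl⟩

lemma coverEntropy_YfSet_eq_Xf {f : Polynomial ℤ} (hf : f ≠ 0) :
    coverEntropy shiftR (YfSet f) = coverEntropy shiftT (Xf f) := by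
  rw [← image_toTorus_YfSet]
  exact le_antisymm
    ((hasPolynomialFibers_toTorus hf).coverEntropy_le (Set.mapsTo_image toTorus (YfSet f)))
    (coverEntropy_image_le_of_uniformContinuous semiconj_toTorus uniformContinuous_toTorus _)

end Entropy

theorem entropy_Ybar_Zbar_general (f : Polynomial ℤ) (hf : f ≠ 0) :
    Dynamics.coverEntropy shiftR (closure (YfSet f)) =
      Dynamics.coverEntropy shiftR (ZbarR f) ∧
    Dynamics.coverEntropy shiftR (ZbarR f) =
      Dynamics.coverEntropy shiftT (Xf f) := by
  have hYZ := coverEntropy_closure_YfSet_eq_ZbarR hf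
  refine ⟨hYZ, ?_⟩
  rw [← hYZ, Dynamics.coverEntropy_closure continuous_shiftR, coverEntropy_YfSet_eq_Xf hf]

/-- `h(σ̄|_{Ȳ_f}) = h(σ̄|_{Z̄_f}) = h(α_f)`, all entropies being topological
entropies with respect to the topology of coordinatewise convergence. -/
theorem entropy_Ybar_Zbar (f : Polynomial ℤ) (hm : 1 ≤ f.natDegree)
    (hlead : 0 < f.leadingCoeff) (h0 : f.coeff 0 ≠ 0)
    (hirr : Irreducible (Polynomial.toLaurent f)) (hnc : Noncyclotomic f) :
    Dynamics.coverEntropy shiftR (closure (YfSet f)) =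
      Dynamics.coverEntropy shiftR (ZbarR f) ∧
    Dynamics.coverEntropy shiftR (ZbarR f) =
      Dynamics.coverEntropy shiftT (Xf f) :=
  entropy_Ybar_Zbar_general f fun h => h0 (by simp [h])

end
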